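/- arXiv:1409.3694 — 2 statements merged into one kernel-verified Lean document; each statement's English description precedes it below -/
import Mathlib

section
/- Let q be an even prime power, let n > 2 and r ≥ 1, and let α₁, …, α_r ∈ 𝔽_q[x] be distinct polynomials with deg α_j < n. Let 𝔽̄_q be an algebraic closure of 𝔽_q, let U₀, …, U_{n−1} be indeterminates, let E = 𝔽̄_q(U₀, …, U_{n−1}), and let 𝓕 = x^n + U_{n−1}x^{n−1} + ⋯ + U₁x + U₀ ∈ E[x]. Then each polynomial 𝓕 + α_i is separable over E, and the classes of Berl(𝓕 + α₁), …, Berl(𝓕 + α_r) in E/℘(E) are linearly independent over 𝔽₂; equivalently, for every nonempty subset I ⊆ {1, …, r} there is no H ∈ E with Σ_{i∈I} Berl(𝓕 + α_i) = H² + H. -/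
/-!
Over a ring of characteristic 2, `δ(r) = ∏_{i<j} (r_i + r_j)` and the numerator of
`∑_{i<j} r_i r_j / (r_i + r_j)²` over the denominator `δ(r)²` are symmetric in the roots `r_i`.
By the fundamental theorem of symmetric functions they are therefore universal polynomials
`coeffDelta`, `coeffNumer` with coefficients in `ZMod 2` in the coefficients of `∏ (x - r_i)`
(`coeffDelta_eq`, `coeffNumer_eq`). So `Berl(𝓕 + α_i) = N_i / δ_i²` with `N_i`, `δ_i` in
`R = 𝔽̄_q[U₀, …, U_{n-1}]`, and `δ_i ≠ 0` gives separability (`separable_and_berlK`).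

Suppose `∑_{i ∈ I} N_i / δ_i² = H² + H`. As `R` is integrally closed, `M = H ∏ δ_i` lies in `R`,
and `M² + M ∏ δ_i = ∑_i N_i ∏_{j ≠ i} δ_j²` is an identity in `R`, which may be specialized.
Fix `i₀ ∈ I` and specialize the `U`'s to `𝔽̄_q[t]` so that `𝓕 + α_{i₀}` becomes
`(x² + t) ∏_k (x - c_k)`, where the `n - 2 > 0` distinct constants `c_k` are not zeros of any
`α_j - α_{i₀}`. This polynomial has the double root `s = √t`, so `δ_{i₀}` becomes `0`, while the
other `𝓕 + α_j` stay separable (`exists_separable`; this is where `n > 2` is needed), so their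
`δ_j` stay nonzero. The identity becomes `M² = N_{i₀} ∏_{j ≠ i₀} δ_j²`, where `N_{i₀}` specializes
to `(s A)²` with `A` of even degree in `s` (`numer_double`, `even_natDegree_simplePairs`).
Hence `M = s A ∏ δ_j` up to sign, where `M` and `∏ δ_j` are polynomials in `s²`: the left side has
even and the right side odd degree in `s`, a contradiction (`no_solution`).
-/

open Polynomial
open scoped Classical

/-- `Σ_{i<j} r_i r_j / (r_i + r_j)²` over a multiset of roots. (In characteristic 2 the
diagonal terms `r_i r_i / (r_i + r_i)²` vanish, since division by zero is zero.) -/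
noncomputable def berlSum {L : Type*} [Field L] (m : Multiset L) : L :=
  (m.sym2.map (Sym2.lift ⟨fun x y => x * y / (x + y) ^ 2,
    fun x y => by
      show x * y / (x + y) ^ 2 = y * x / (y + x) ^ 2
      rw [mul_comm, add_comm]⟩)).sum

/-- Berlekamp's discriminant of `F` as an element of the base field `K`
(for separable `F` in characteristic 2 it indeed lies in `K`). -/
noncomputable def berlK {K : Type*} [Field K] (F : Polynomial K) : K :=
  if h : ∃ b : K, algebraMap K F.SplittingField b =
      berlSum ((F.map (algebraMap K F.SplittingField)).roots) then h.choose else 0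

/-! ### The universal discriminant polynomials -/

namespace Berlekamp

/-- `r i + r j`, as a function of the unordered pair `s(i, j)`. -/
def pairSum {ι L : Type*} [CommRing L] (r : ι → L) : Sym2 ι → L :=
  Sym2.lift ⟨fun i j => r i + r j, fun _ _ => add_comm _ _⟩

/-- `r i * r j`, as a function of the unordered pair `s(i, j)`. -/
def pairProd {ι L : Type*} [CommRing L] (r : ι → L) : Sym2 ι → L :=
  Sym2.lift ⟨fun i j => r i * r j, fun _ _ => mul_comm _ _⟩

/-- The unordered pairs of distinct indices. -/
def pairs (n : ℕ) : Finset (Sym2 (Fin n)) := Finset.univ.filter fun z => ¬ z.IsDiag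

/-- `∏_{i<j} (r_i + r_j)`, in characteristic 2 a square root of the discriminant. -/
def delta {n : ℕ} {L : Type*} [CommRing L] (r : Fin n → L) : L :=
  ∏ z ∈ pairs n, pairSum r z

/-- The numerator of Berlekamp's discriminant over the denominator `delta r ^ 2`. -/
def numer {n : ℕ} {L : Type*} [CommRing L] (r : Fin n → L) : L :=
  ∑ z ∈ pairs n, pairProd r z * ∏ w ∈ (pairs n).erase z, pairSum r w ^ 2

section

variable {n : ℕ} {L M : Type*} [CommRing L] [CommRing M]

lemma map_pairSum {ι : Type*} (g : L →+* M) (r : ι → L) (z : Sym2 ι) :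
    g (pairSum r z) = pairSum (fun i => g (r i)) z := by
  induction z with | _ i j => simp [pairSum]

lemma map_pairProd {ι : Type*} (g : L →+* M) (r : ι → L) (z : Sym2 ι) :
    g (pairProd r z) = pairProd (fun i => g (r i)) z := by
  induction z with | _ i j => simp [pairProd]

lemma map_delta (g : L →+* M) (r : Fin n → L) :
    g (delta r) = delta (fun i => g (r i)) := by
  simp [delta, map_pairSum]

lemma map_numer (g : L →+* M) (r : Fin n → L) :
    g (numer r) = numer (fun i => g (r i)) := by
  simp [numer, map_pairSum, map_pairProd]

lemma pairSum_comp {ι : Type*} (r : ι → L) (σ : ι → ι) (z : Sym2 ι) :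
    pairSum (r ∘ σ) z = pairSum r (z.map σ) := by
  induction z with | _ i j => simp [pairSum]

lemma pairProd_comp {ι : Type*} (r : ι → L) (σ : ι → ι) (z : Sym2 ι) :
    pairProd (r ∘ σ) z = pairProd r (z.map σ) := by
  induction z with | _ i j => simp [pairProd]

lemma map_mem_pairs (σ : Equiv.Perm (Fin n)) (z : Sym2 (Fin n)) :
    z.map σ ∈ pairs n ↔ z ∈ pairs n := by
  simp [pairs, Sym2.isDiag_map σ.injective]

lemma image_pairs (σ : Equiv.Perm (Fin n)) : (pairs n).image (Sym2.map σ) = pairs n := by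
  apply Finset.eq_of_subset_of_card_le
  · intro z hz
    obtain ⟨w, hw, rfl⟩ := Finset.mem_image.1 hz
    exact (map_mem_pairs σ w).2 hw
  · rw [Finset.card_image_of_injective _ (Sym2.map.injective σ.injective)]

lemma delta_comp (r : Fin n → L) (σ : Equiv.Perm (Fin n)) : delta (r ∘ σ) = delta r := by
  have hinj := Sym2.map.injective σ.injective
  conv_rhs => rw [delta, ← image_pairs σ, Finset.prod_image fun _ _ _ _ h => hinj h]
  simp [delta, pairSum_comp]

lemma numer_comp (r : Fin n → L) (σ : Equiv.Perm (Fin n)) : numer (r ∘ σ) = numer r := by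
  have hinj := Sym2.map.injective σ.injective
  conv_rhs => rw [numer, ← image_pairs σ, Finset.sum_image fun _ _ _ _ h => hinj h]
  refine Finset.sum_congr rfl fun z _ => ?_
  rw [← Finset.image_erase hinj, Finset.prod_image fun _ _ _ _ h => hinj h]
  simp [pairSum_comp, pairProd_comp]

end

lemma isSymmetric_delta (n : ℕ) :
    (delta (MvPolynomial.X : Fin n → MvPolynomial (Fin n) (ZMod 2))).IsSymmetric := by
  intro σ
  have key (g : MvPolynomial (Fin n) (ZMod 2) →+* MvPolynomial (Fin n) (ZMod 2))
      (hg : ∀ i, g (MvPolynomial.X i) = MvPolynomial.X (σ i)) :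
      g (delta MvPolynomial.X) = delta MvPolynomial.X := by
    rw [map_delta]
    simp_rw [hg]
    exact delta_comp MvPolynomial.X σ
  exact key (MvPolynomial.rename σ).toRingHom fun i => MvPolynomial.rename_X _ _

lemma isSymmetric_numer (n : ℕ) :
    (numer (MvPolynomial.X : Fin n → MvPolynomial (Fin n) (ZMod 2))).IsSymmetric := by
  intro σ
  have key (g : MvPolynomial (Fin n) (ZMod 2) →+* MvPolynomial (Fin n) (ZMod 2))
      (hg : ∀ i, g (MvPolynomial.X i) = MvPolynomial.X (σ i)) :
      g (numer MvPolynomial.X) = numer MvPolynomial.X := by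
    rw [map_numer]
    simp_rw [hg]
    exact numer_comp MvPolynomial.X σ
  exact key (MvPolynomial.rename σ).toRingHom fun i => MvPolynomial.rename_X _ _

/-- The polynomial expressing a symmetric `Q` through the elementary symmetric functions; the
variable of index `i` stands for `esymm (i + 1)`. -/
noncomputable def unsym {n : ℕ} (Q : MvPolynomial (Fin n) (ZMod 2)) (hQ : Q.IsSymmetric) :
    MvPolynomial (Fin n) (ZMod 2) :=
  (MvPolynomial.esymmAlgEquiv (Fin n) (ZMod 2) (Fintype.card_fin n)).symm ⟨Q, hQ⟩

lemma aeval_unsym {n : ℕ} (Q : MvPolynomial (Fin n) (ZMod 2)) (hQ : Q.IsSymmetric) :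
    MvPolynomial.aeval (fun i : Fin n => MvPolynomial.esymm (Fin n) (ZMod 2) (i + 1))
      (unsym Q hQ) = Q := by
  rw [← MvPolynomial.esymmAlgHom_apply, ← MvPolynomial.esymmAlgEquiv_apply _ _
    (Fintype.card_fin n)]
  simp [unsym]

/-- The monic polynomial of degree `n` with lower coefficients `u`. -/
noncomputable def monicPoly {n : ℕ} {L : Type*} [CommRing L] (u : Fin n → L) : L[X] :=
  X ^ n + ∑ i : Fin n, C (u i) * X ^ (i : ℕ)

/-- `delta` of the roots of `monicPoly u`, as a polynomial in the coefficients `u`. The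
coefficient of `x ^ (n - 1 - i)` is the `(i + 1)`-st elementary symmetric function, whence the
order reversal. The homomorphism `f` records that `L` has characteristic 2. -/
noncomputable def coeffDelta {n : ℕ} {L : Type*} [CommRing L] (f : ZMod 2 →+* L)
    (u : Fin n → L) : L :=
  MvPolynomial.eval₂ f (fun i => u (Fin.rev i)) (unsym _ (isSymmetric_delta n))

/-- `numer` of the roots of `monicPoly u`, as a polynomial in the coefficients `u`. -/
noncomputable def coeffNumer {n : ℕ} {L : Type*} [CommRing L] (f : ZMod 2 →+* L)
    (u : Fin n → L) : L :=
  MvPolynomial.eval₂ f (fun i => u (Fin.rev i)) (unsym _ (isSymmetric_numer n))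

section

variable {n : ℕ} {L M : Type*} [CommRing L] [CommRing M]

lemma map_coeffDelta (f : ZMod 2 →+* L) (f' : ZMod 2 →+* M) (g : L →+* M) (u : Fin n → L) :
    g (coeffDelta f u) = coeffDelta f' (fun i => g (u i)) := by
  have := ZMod.subsingleton_ringHom (n := 2) (R := M)
  rw [coeffDelta, MvPolynomial.hom_eval₂, Subsingleton.elim (g.comp f) f']
  rfl

lemma map_coeffNumer (f : ZMod 2 →+* L) (f' : ZMod 2 →+* M) (g : L →+* M) (u : Fin n → L) :
    g (coeffNumer f u) = coeffNumer f' (fun i => g (u i)) := by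
  have := ZMod.subsingleton_ringHom (n := 2) (R := M)
  rw [coeffNumer, MvPolynomial.hom_eval₂, Subsingleton.elim (g.comp f) f']
  rfl

lemma add_self_eq_zero (f : ZMod 2 →+* L) (x : L) : x + x = 0 := by
  have h : (1 : L) + 1 = 0 := by
    rw [← map_one f, ← map_add, show (1 : ZMod 2) + 1 = 0 from rfl, map_zero]
  calc x + x = x * (1 + 1) := by ring
    _ = 0 := by rw [h, mul_zero]

lemma X_sub_C_eq (f : ZMod 2 →+* L) (x : L) : (X - C x : L[X]) = X + C x := by
  rw [sub_eq_add_neg, ← C_neg, neg_eq_of_add_eq_zero_left (add_self_eq_zero f x)]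

lemma coeff_monicPoly (u : Fin n → L) (i : Fin n) : (monicPoly u).coeff i = u i := by
  have h : ∀ j : Fin n, (i : ℕ) = j ↔ i = j := fun j => Fin.ext_iff.symm
  simp [monicPoly, coeff_X_pow, i.2.ne, finsetSum_coeff, h]

lemma monic_monicPoly (u : Fin n → L) : (monicPoly u).Monic := by
  refine monic_X_pow_add ?_
  refine (degree_sum_le _ _).trans_lt ((Finset.sup_lt_iff (by exact WithBot.bot_lt_coe n)).2 ?_)
  intro i _
  exact (degree_C_mul_X_pow_le _ _).trans_lt (by exact_mod_cast i.2)

lemma natDegree_monicPoly [Nontrivial L] (u : Fin n → L) : (monicPoly u).natDegree = n := by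
  refine natDegree_eq_of_degree_eq_some ?_
  rw [monicPoly, degree_add_eq_left_of_degree_lt, degree_X_pow]
  rw [degree_X_pow]
  refine (degree_sum_le _ _).trans_lt ((Finset.sup_lt_iff (by exact WithBot.bot_lt_coe n)).2 ?_)
  intro i _
  exact (degree_C_mul_X_pow_le _ _).trans_lt (by exact_mod_cast i.2)

lemma monicPoly_coeff (p : L[X]) (hp : p.Monic) (hn : p.natDegree = n) :
    monicPoly (fun i : Fin n => p.coeff i) = p := by
  conv_rhs => rw [hp.as_sum, hn]
  rw [monicPoly, ← Fin.sum_univ_eq_sum_range (fun i => C (p.coeff i) * X ^ i)]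

lemma monicPoly_add (u : Fin n → L) (p : L[X]) (hn : p.degree < n) :
    monicPoly (fun i => u i + p.coeff i) = monicPoly u + p := by
  have hp : p = ∑ i : Fin n, C (p.coeff i) * X ^ (i : ℕ) := by
    ext k
    simp only [finsetSum_coeff, coeff_C_mul, coeff_X_pow, mul_ite, mul_one, mul_zero]
    by_cases hk : k < n
    · rw [Finset.sum_eq_single ⟨k, hk⟩]
      · simp
      · intro j _ hj
        rw [if_neg]
        rintro rfl
        exact hj rfl
      · simp
    · rw [coeff_eq_zero_of_degree_lt (hn.trans_le (by exact_mod_cast not_lt.1 hk)),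
        Finset.sum_eq_zero]
      intro j _
      rw [if_neg]
      have := j.2
      omega
  conv_rhs => rw [hp]
  simp [monicPoly, add_mul, Finset.sum_add_distrib, add_assoc]

lemma map_monicPoly (g : L →+* M) (u : Fin n → L) :
    (monicPoly u).map g = monicPoly (fun i => g (u i)) := by
  simp [monicPoly, Polynomial.map_sum]

/-- Vieta's formulas, in characteristic 2. -/
lemma eval₂_esymm (f : ZMod 2 →+* L) (u r : Fin n → L)
    (h : monicPoly u = ∏ i, (X - C (r i))) (i : Fin n) :
    MvPolynomial.eval₂ f r (MvPolynomial.esymm (Fin n) (ZMod 2) (i + 1)) = u (Fin.rev i) := by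
  rw [← coeff_monicPoly u, h]
  simp_rw [X_sub_C_eq f]
  rw [Finset.prod_X_add_C_coeff _ _ (by simp [Fin.val_rev])]
  have hi : Fintype.card (Fin n) - (Fin.rev i : ℕ) = i + 1 := by
    rw [Fin.val_rev, Fintype.card_fin]; omega
  rw [Finset.card_univ, hi, ← MvPolynomial.coe_eval₂Hom]
  simp [MvPolynomial.esymm, map_sum, map_prod]

lemma eval₂_unsym (f : ZMod 2 →+* L) (u r : Fin n → L)
    (h : monicPoly u = ∏ i, (X - C (r i))) (Q : MvPolynomial (Fin n) (ZMod 2))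
    (hQ : Q.IsSymmetric) :
    MvPolynomial.eval₂ f (fun i => u (Fin.rev i)) (unsym Q hQ) = MvPolynomial.eval₂ f r Q := by
  have key := congrArg (MvPolynomial.eval₂Hom f r) (aeval_unsym Q hQ)
  rw [MvPolynomial.aeval_def, MvPolynomial.hom_eval₂] at key
  simp only [MvPolynomial.coe_eval₂Hom, eval₂_esymm f u r h] at key
  have := ZMod.subsingleton_ringHom (n := 2) (R := L)
  rw [← key]
  congr 1
  exact Subsingleton.elim _ _

lemma coeffDelta_eq (f : ZMod 2 →+* L) (u r : Fin n → L)
    (h : monicPoly u = ∏ i, (X - C (r i))) : coeffDelta f u = delta r := by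
  rw [coeffDelta, eval₂_unsym f u r h, ← MvPolynomial.coe_eval₂Hom, map_delta]
  simp

lemma coeffNumer_eq (f : ZMod 2 →+* L) (u r : Fin n → L)
    (h : monicPoly u = ∏ i, (X - C (r i))) : coeffNumer f u = numer r := by
  rw [coeffNumer, eval₂_unsym f u r h, ← MvPolynomial.coe_eval₂Hom, map_numer]
  simp

lemma pairSum_ne_zero (f : ZMod 2 →+* L) {ι : Type*} {r : ι → L} (hr : Function.Injective r)
    {z : Sym2 ι} (hz : ¬ z.IsDiag) : pairSum r z ≠ 0 := by
  induction z with
  | _ i j =>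
    intro h
    refine hz (hr ?_)
    exact add_right_cancel ((show r i + r j = 0 from h).trans (add_self_eq_zero f _).symm)

lemma delta_ne_zero_iff [IsDomain L] (f : ZMod 2 →+* L) (r : Fin n → L) :
    delta r ≠ 0 ↔ Function.Injective r := by
  refine ⟨fun h i j hij => ?_, fun h => Finset.prod_ne_zero_iff.2 fun z hz =>
    pairSum_ne_zero f h (Finset.mem_filter.1 hz).2⟩
  by_contra hne
  refine h (Finset.prod_eq_zero (i := s(i, j)) (by simpa [pairs] using hne) ?_)
  change r i + r j = 0
  rw [hij, add_self_eq_zero f]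

end

/-! ### Berlekamp's discriminant as a fraction -/

lemma berlSum_eq {n : ℕ} {L : Type*} [Field L] (f : ZMod 2 →+* L) (r : Fin n → L)
    (hr : Function.Injective r) :
    berlSum (Finset.univ.val.map r) = numer r / delta r ^ 2 := by
  have h1 : berlSum (Finset.univ.val.map r) =
      ∑ z : Sym2 (Fin n), pairProd r z / pairSum r z ^ 2 := by
    rw [berlSum, Multiset.sym2_map, ← Finset.sym2_val, Finset.sym2_univ, Multiset.map_map]
    refine Finset.sum_congr rfl fun z _ => ?_
    induction z with | _ i j => rfl
  have h2 : ∑ z : Sym2 (Fin n), pairProd r z / pairSum r z ^ 2 =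
      ∑ z ∈ pairs n, pairProd r z / pairSum r z ^ 2 := by
    refine (Finset.sum_subset (Finset.subset_univ _) fun z _ hz => ?_).symm
    have hz : z.IsDiag := by simpa [pairs] using hz
    -- a diagonal term has denominator zero, so it vanishes
    induction z with
    | _ i j =>
      have hij : i = j := hz
      subst hij
      have : pairSum r s(i, i) = 0 := add_self_eq_zero f _
      simp [this]
  rw [h1, h2, numer, Finset.sum_div]
  refine Finset.sum_congr rfl fun z hz => ?_
  have hz' := pairSum_ne_zero f hr (Finset.mem_filter.1 hz).2
  have hd := (delta_ne_zero_iff f r).2 hr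
  rw [div_eq_div_iff (pow_ne_zero 2 hz') (pow_ne_zero 2 hd), delta,
    ← Finset.mul_prod_erase _ _ hz, Finset.prod_pow]
  ring

lemma exists_roots_of_splits {n : ℕ} {L : Type*} [Field L] (u : Fin n → L)
    (h : (monicPoly u).Splits) :
    ∃ r : Fin n → L, monicPoly u = ∏ i, (X - C (r i)) ∧
      (monicPoly u).roots = Finset.univ.val.map r := by
  have hcard := h.natDegree_eq_card_roots
  have hprod := h.eq_prod_roots
  rw [natDegree_monicPoly] at hcard
  rw [(monic_monicPoly u).leadingCoeff, C_1, one_mul] at hprod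
  obtain ⟨l, hl⟩ := Quot.exists_rep (monicPoly u).roots
  change (l : Multiset L) = _ at hl
  have hlen : n = l.length := by rw [hcard, ← hl]; rfl
  have hroots : (monicPoly u).roots =
      Finset.univ.val.map (fun i : Fin n => l.get (Fin.cast hlen i)) := by
    rw [← hl, Fin.univ_val_map]
    congr 1
    refine List.ext_get (by simpa using hlen.symm) fun i _ _ => by simp
  refine ⟨_, ?_, hroots⟩
  conv_lhs => rw [hprod, hroots, Multiset.map_map]
  rfl

/-- Where `coeffDelta` does not vanish, the defining condition of `berlK` is met, with the value
given by the universal polynomials. -/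
lemma separable_and_berlK {n : ℕ} {E : Type*} [Field E] (f : ZMod 2 →+* E) (u : Fin n → E)
    (h : coeffDelta f u ≠ 0) :
    (monicPoly u).Separable ∧ berlK (monicPoly u) = coeffNumer f u / coeffDelta f u ^ 2 := by
  set S := (monicPoly u).SplittingField
  set g := algebraMap E S
  have hsp := SplittingField.splits (monicPoly u)
  rw [map_monicPoly] at hsp
  obtain ⟨r, hr, hroots⟩ := exists_roots_of_splits _ hsp
  have hd : g (coeffDelta f u) = delta r := by
    rw [map_coeffDelta f (g.comp f) g, coeffDelta_eq _ _ r hr]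
  have hN : g (coeffNumer f u) = numer r := by
    rw [map_coeffNumer f (g.comp f) g, coeffNumer_eq _ _ r hr]
  have hinj : Function.Injective r := by
    rw [← delta_ne_zero_iff (g.comp f), ← hd]
    exact (map_ne_zero g).2 h
  have hb : g (coeffNumer f u / coeffDelta f u ^ 2) =
      berlSum (((monicPoly u).map g).roots) := by
    rw [map_monicPoly, hroots, berlSum_eq (g.comp f) r hinj, map_div₀, map_pow, hd, hN]
  constructor
  · rw [← separable_map g, map_monicPoly, hr]
    exact separable_prod_X_sub_C_iff.2 hinj
  · have hex : ∃ b : E, g b = berlSum (((monicPoly u).map g).roots) := ⟨_, hb⟩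
    rw [berlK, dif_pos hex]
    exact g.injective (hex.choose_spec.trans hb.symm)

/-! ### Specialization to one double root -/

section

variable {K : Type*} [Field K]

/-- An inseparable member of this pencil has a multiple root among the finitely many zeros of
`β * G' - β' * G`, and each of these excludes a single value of `τ`. -/
lemma exists_separable [IsAlgClosed K] (f : ZMod 2 →+* K) {m : ℕ} (hm : 0 < m) (c : Fin m → K)
    (hc : Function.Injective c) (β : K[X]) (hβ : ∀ k, β.eval (c k) ≠ 0) :
    ∃ τ : K, ((X ^ 2 + C τ) * ∏ k, (X - C (c k)) + β).Separable := by
  set G : K[X] := ∏ k, (X - C (c k)) with hG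
  have hGsep : G.Separable := separable_prod_X_sub_C_iff.2 hc
  have hGroot (y : K) : G.eval y = 0 ↔ ∃ k, y = c k := by
    simp [hG, eval_prod, Finset.prod_eq_zero_iff, sub_eq_zero]
  have h2 : (2 : K) = 0 := by rw [← one_add_one_eq_two, add_self_eq_zero f]
  set W := β * derivative G - derivative β * G with hW
  have hW0 : W ≠ 0 := by
    intro h0
    have hG0 : G.eval (c ⟨0, hm⟩) = 0 := (hGroot _).2 ⟨_, rfl⟩
    have h1 := congrArg (eval (c ⟨0, hm⟩)) h0
    simp only [hW, eval_sub, eval_mul, hG0, mul_zero, sub_zero, eval_zero, mul_eq_zero] at h1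
    have h3 := hGsep.aeval_derivative_ne_zero (x := c ⟨0, hm⟩) (by simpa using hG0)
    rw [coe_aeval_eq_eval] at h3
    exact h1.elim (hβ _) h3
  obtain ⟨τ, hτ⟩ := Infinite.exists_notMem_finset
    (W.roots.toFinset.image fun y => -(β.eval y / G.eval y) - y ^ 2)
  refine ⟨τ, (isCoprime_iff_aeval_ne_zero_of_isAlgClosed K K _ _).2 fun y => ?_⟩
  by_contra! hy
  obtain ⟨hy1, hy2⟩ := hy
  simp only [coe_aeval_eq_eval, derivative_add, derivative_mul, derivative_X_sq, derivative_C,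
    eval_add, eval_mul, eval_pow, eval_X, eval_C, add_zero] at hy1 hy2
  have hGy : G.eval y ≠ 0 := by
    intro h0
    obtain ⟨k, rfl⟩ := (hGroot y).1 h0
    rw [h0, mul_zero, zero_add] at hy1
    exact hβ k hy1
  refine hτ (Finset.mem_image.2 ⟨y, ?_, ?_⟩)
  · rw [Multiset.mem_toFinset, mem_roots hW0, IsRoot.def, hW]
    simp only [eval_sub, eval_mul]
    linear_combination (derivative G).eval y * hy1 - G.eval y * hy2 + G.eval y ^ 2 * y * h2
  · field_simp
    linear_combination -hy1

/-- The roots `s, s, c_0, …, c_{m-1}`, where `s` is the variable of `K[X]`. -/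
noncomputable def doubleRoots {m : ℕ} (c : Fin m → K) : Fin (m + 2) → K[X] :=
  Fin.cons X (Fin.cons X fun k => C (c k))

lemma prod_doubleRoots (f : ZMod 2 →+* K) {m : ℕ} (c : Fin m → K) :
    ∏ i, (X - C (doubleRoots c i)) =
      (X ^ 2 + C (X ^ 2)) * ∏ k, (X - C (C (c k)) : K[X][X]) := by
  have h := add_self_eq_zero ((C.comp C : K →+* K[X][X]).comp f) (X * C X)
  rw [Fin.prod_univ_succ, Fin.prod_univ_succ]
  simp only [doubleRoots, Fin.cons_zero, Fin.cons_succ, C_pow]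
  linear_combination (-h) * ∏ k, (X - C (C (c k)) : K[X][X])

/-- The pairs other than the one made of the double root. -/
def simplePairs (m : ℕ) : Finset (Sym2 (Fin (m + 2))) := (pairs (m + 2)).erase s(0, 1)

lemma mem_pairs_zero_one (m : ℕ) : s(0, 1) ∈ pairs (m + 2) := by
  simp [pairs]

lemma pairSum_double (f : ZMod 2 →+* K) {m : ℕ} (c : Fin m → K) :
    pairSum (doubleRoots c) s(0, 1) = 0 :=
  add_self_eq_zero (C.comp f) (X : K[X])

lemma delta_double (f : ZMod 2 →+* K) {m : ℕ} (c : Fin m → K) : delta (doubleRoots c) = 0 :=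
  Finset.prod_eq_zero (mem_pairs_zero_one m) (pairSum_double f c)

lemma numer_double (f : ZMod 2 →+* K) {m : ℕ} (c : Fin m → K) :
    numer (doubleRoots c) = (X * ∏ w ∈ simplePairs m, pairSum (doubleRoots c) w) ^ 2 := by
  rw [numer, Finset.sum_eq_single_of_mem _ (mem_pairs_zero_one m)]
  · have : pairProd (doubleRoots c) s(0, 1) = X * X := rfl
    rw [this, simplePairs, Finset.prod_pow]
    ring
  · intro z _ hz
    rw [Finset.prod_eq_zero (i := s(0, 1)), mul_zero]
    · exact Finset.mem_erase.2 ⟨hz.symm, mem_pairs_zero_one m⟩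
    · rw [pairSum_double f, zero_pow two_ne_zero]

lemma pairSum_double_ne_zero (f : ZMod 2 →+* K) {m : ℕ} (c : Fin m → K)
    (hc : Function.Injective c) {z : Sym2 (Fin (m + 2))} (hz : z ∈ simplePairs m) :
    pairSum (doubleRoots c) z ≠ 0 := by
  -- two equal entries of `doubleRoots c` can only be those of index `0` and `1`
  have hX (k : Fin m) : (X : K[X]) ≠ C (c k) := X_ne_C _
  induction z with
  | _ i j =>
    intro h
    have hij : doubleRoots c i = doubleRoots c j :=
      add_right_cancel ((show _ = (0 : K[X]) from h).trans
        (add_self_eq_zero (C.comp f) (doubleRoots c j)).symm)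
    obtain ⟨hne, hdiag⟩ := Finset.mem_erase.1 hz
    have hdiag : i ≠ j := by simpa [pairs] using hdiag
    induction i using Fin.cases with
    | zero =>
      induction j using Fin.cases with
      | zero => exact hdiag rfl
      | succ j =>
        induction j using Fin.cases with
        | zero => exact hne rfl
        | succ j => exact hX j hij
    | succ i =>
      induction i using Fin.cases with
      | zero =>
        induction j using Fin.cases with
        | zero => exact hne Sym2.eq_swap
        | succ j =>
          induction j using Fin.cases with
          | zero => exact hdiag rfl
          | succ j => exact hX j hij
      | succ i =>
        induction j using Fin.cases with
        | zero => exact hX i hij.symm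
        | succ j =>
          induction j using Fin.cases with
          | zero => exact hX i hij.symm
          | succ j => exact hdiag (congrArg _ (congrArg _ (hc (C_injective hij))))

lemma doubleRoots_swap {m : ℕ} (c : Fin m → K) :
    doubleRoots c ∘ Equiv.swap 0 1 = doubleRoots c := by
  funext i
  induction i using Fin.cases with
  | zero =>
    rw [Function.comp_apply, Equiv.swap_apply_left]; rfl
  | succ i =>
    induction i using Fin.cases with
    | zero =>
      have : Equiv.swap (0 : Fin (m + 2)) 1 (Fin.succ 0) = 0 := Equiv.swap_apply_right _ _
      rw [Function.comp_apply, this]; rfl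
    | succ i =>
      rw [Function.comp_apply, Equiv.swap_apply_of_ne_of_ne (Fin.succ_ne_zero _)]
      rw [← Fin.succ_zero_eq_one]
      exact fun h => Fin.succ_ne_zero _ (Fin.succ_injective _ h)

/-- Exchanging the two copies of the double root pairs off the factors of degree one. -/
lemma even_natDegree_simplePairs (f : ZMod 2 →+* K) {m : ℕ} (c : Fin m → K)
    (hc : Function.Injective c) :
    Even (∏ w ∈ simplePairs m, pairSum (doubleRoots c) w).natDegree := by
  rw [natDegree_prod _ _ fun z hz => pairSum_double_ne_zero f c hc hz,
    ← ZMod.natCast_eq_zero_iff_even, Nat.cast_sum]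
  set σ : Equiv.Perm (Fin (m + 2)) := Equiv.swap 0 1 with hσ
  have hinv (z : Sym2 (Fin (m + 2))) : (z.map σ).map σ = z := by
    induction z with | _ i j => simp [σ]
  have hfix : (s(0, 1) : Sym2 (Fin (m + 2))).map σ = s(0, 1) := by
    simp [σ, Sym2.eq_swap]
  refine Finset.sum_involution (fun z _ => z.map σ) ?_ ?_ ?_ ?_
  · intro z _
    rw [← pairSum_comp, hσ, doubleRoots_swap, CharTwo.add_self_eq_zero]
  · intro z hz hne heq
    refine hne ?_
    obtain ⟨hz1, hz2⟩ := Finset.mem_erase.1 hz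
    have hdiag : ¬ z.IsDiag := (Finset.mem_filter.1 hz2).2
    -- a pair fixed by the exchange, other than `s(0, 1)`, avoids `0` and `1`
    induction z with
    | _ i j =>
      have hdiag : i ≠ j := hdiag
      have hij : σ i = i ∧ σ j = j := by
        rw [Sym2.map_mk, Sym2.eq_iff] at heq
        rcases heq with h | ⟨h1, h2⟩
        · exact h
        · exfalso
          rw [hσ, Equiv.swap_apply_def] at h1
          split_ifs at h1 with h3 h4
          · subst h3; subst h1; exact hz1 rfl
          · subst h4; subst h1; exact hz1 Sym2.eq_swap
          · exact hdiag h1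
      have hconst (i : Fin (m + 2)) (hi : σ i = i) : ∃ a, doubleRoots c i = C a := by
        induction i using Fin.cases with
        | zero => simp [σ] at hi
        | succ i =>
          induction i using Fin.cases with
          | zero => simp [σ] at hi
          | succ i => exact ⟨c i, rfl⟩
      obtain ⟨a, ha⟩ := hconst i hij.1
      obtain ⟨b, hb⟩ := hconst j hij.2
      have : pairSum (doubleRoots c) s(i, j) = C (a + b) := by
        rw [C_add, ← ha, ← hb]; rfl
      rw [this, natDegree_C, Nat.cast_zero]
  · intro z hz
    obtain ⟨hz1, hz2⟩ := Finset.mem_erase.1 hz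
    refine Finset.mem_erase.2 ⟨fun h => hz1 ?_, (map_mem_pairs σ z).2 hz2⟩
    rw [← hinv z, h, hfix]
  · intro z _
    exact hinv z

/-- After clearing denominators, specialize so that the `i₀`-th polynomial becomes
`(x² + t) ∏ (x - c_k)` and the others stay separable; then put `t = s²`. All terms but the
`i₀`-th vanish and the equation says that an even polynomial in `s` is the square root
of `t · (square)`, contradicting the parity of degrees. -/
lemma no_solution [IsAlgClosed K] (f : ZMod 2 →+* K) {m : ℕ} (hm : 0 < m) {ι : Type*}
    [DecidableEq ι] (I : Finset ι) (β : ι → K[X]) (hdeg : ∀ i, (β i).degree < (m + 2 : ℕ))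
    (hβ : Function.Injective β) (i₀ : ι) (hi₀ : i₀ ∈ I)
    (g : ZMod 2 →+* MvPolynomial (Fin (m + 2)) K)
    (u : ι → Fin (m + 2) → MvPolynomial (Fin (m + 2)) K)
    (hu : ∀ i k, u i k = MvPolynomial.X k + MvPolynomial.C ((β i).coeff k))
    (M : MvPolynomial (Fin (m + 2)) K) :
    M ^ 2 + M * ∏ i ∈ I, coeffDelta g (u i) ≠
      ∑ i ∈ I, coeffNumer g (u i) * ∏ j ∈ I.erase i, coeffDelta g (u j) ^ 2 := by
  intro hM
  -- distinct constants that are roots of no difference `β j - β i₀`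
  obtain ⟨c, hc, hcβ⟩ : ∃ c : Fin m → K, Function.Injective c ∧
      ∀ j ∈ I.erase i₀, ∀ k, (β j - β i₀).eval (c k) ≠ 0 := by
    set B := ∏ j ∈ I.erase i₀, (β j - β i₀) with hB
    have hB0 : B ≠ 0 := Finset.prod_ne_zero_iff.2 fun j hj =>
      sub_ne_zero.2 fun h => Finset.ne_of_mem_erase hj (hβ h)
    have hinf : ((B.roots.toFinset : Set K)ᶜ).Infinite :=
      (Finset.finite_toSet _).infinite_compl
    refine ⟨fun k => hinf.natEmbedding _ k, fun a b h => ?_, fun j hj k h => ?_⟩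
    · exact Fin.ext ((hinf.natEmbedding _).injective (Subtype.ext h))
    · refine (hinf.natEmbedding _ k).2 ?_
      rw [Finset.mem_coe, Multiset.mem_toFinset, mem_roots hB0, IsRoot.def]
      exact eval_eq_zero_of_dvd_of_eval_eq_zero (Finset.dvd_prod_of_mem _ hj) h
  set G : K[X] := ∏ k, (X - C (c k)) with hG
  have hGmon : G.Monic := monic_prod_of_monic _ _ fun k _ => monic_X_sub_C _
  have hGdeg : G.natDegree = m := by
    rw [hG, natDegree_prod_of_monic _ _ fun k _ => monic_X_sub_C _]
    simp
  -- the generic member of the pencil; the inner variable is `t`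
  set P : K[X][X] := (X ^ 2 + C X) * G.map C with hP
  have hQmon : (X ^ 2 + C X : K[X][X]).Monic := monic_X_pow_add_C _ two_ne_zero
  have hPmon : P.Monic := hQmon.mul (hGmon.map C)
  have hPdeg : P.natDegree = m + 2 := by
    rw [hP, hQmon.natDegree_mul (hGmon.map C), natDegree_X_pow_add_C, hGmon.natDegree_map,
      hGdeg, add_comm]
  let v : Fin (m + 2) → K[X] := fun k => P.coeff k - C ((β i₀).coeff k)
  let ψ : MvPolynomial (Fin (m + 2)) K →+* K[X] := MvPolynomial.eval₂Hom C v
  have hψu (i : ι) : monicPoly (fun k => ψ (u i k)) = P + (β i - β i₀).map C := by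
    have hd : ((β i - β i₀).map (C : K →+* K[X])).degree < (m + 2 : ℕ) :=
      (degree_map_le).trans_lt ((degree_sub_le _ _).trans_lt (max_lt (hdeg _) (hdeg _)))
    conv_rhs => rw [← monicPoly_coeff P hPmon hPdeg, ← monicPoly_add _ _ hd]
    congr 1
    funext k
    simp [ψ, v, hu]
    ring
  have hδ (j : ι) (hj : j ∈ I.erase i₀) : ψ (coeffDelta g (u j)) ≠ 0 := by
    obtain ⟨τ, hτ⟩ := exists_separable f hm c hc (β j - β i₀) (hcβ j hj)
    intro h0
    have h1 := congrArg (evalRingHom τ) h0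
    rw [map_coeffDelta g (C.comp f) ψ, map_coeffDelta (C.comp f) f (evalRingHom τ),
      map_zero] at h1
    have hpoly : monicPoly (fun k => evalRingHom τ (ψ (u j k))) =
        (X ^ 2 + C τ) * G + (β j - β i₀) := by
      have hid : (evalRingHom τ).comp (C : K →+* K[X]) = RingHom.id K := by
        ext; simp
      rw [← map_monicPoly (evalRingHom τ) (fun k => ψ (u j k)), hψu, hP, Polynomial.map_add,
        Polynomial.map_mul, Polynomial.map_map, Polynomial.map_map, hid]
      simp
    obtain ⟨ρ, hρ, -⟩ := exists_roots_of_splits _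
      (IsAlgClosed.splits (monicPoly (fun k => evalRingHom τ (ψ (u j k)))))
    rw [coeffDelta_eq f _ ρ hρ] at h1
    refine (delta_ne_zero_iff f ρ).2 ?_ h1
    rw [← separable_prod_X_sub_C_iff, ← hρ, hpoly]
    exact hτ
  -- substitute `t = s²`
  let θ : K[X] →+* K[X] := (expand K 2 : K[X] →ₐ[K] K[X])
  have hθinj : Function.Injective θ := expand_injective two_pos
  have hroots : monicPoly (fun k => θ (ψ (u i₀ k))) = ∏ i, (X - C (doubleRoots c i)) := by
    have hid : θ.comp (C : K →+* K[X]) = C := by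
      ext; simp [θ]
    rw [← map_monicPoly θ (fun k => ψ (u i₀ k)), hψu, sub_self, Polynomial.map_zero, add_zero, hP,
      prod_doubleRoots f, Polynomial.map_mul, Polynomial.map_map, hid, hG, Polynomial.map_prod]
    simp [θ]
  have hD0 : θ (ψ (coeffDelta g (u i₀))) = 0 := by
    rw [map_coeffDelta g (C.comp f) ψ, map_coeffDelta (C.comp f) (C.comp f) θ,
      coeffDelta_eq _ _ _ hroots, delta_double f]
  have hN0 : θ (ψ (coeffNumer g (u i₀))) =
      (X * ∏ w ∈ simplePairs m, pairSum (doubleRoots c) w) ^ 2 := by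
    rw [map_coeffNumer g (C.comp f) ψ, map_coeffNumer (C.comp f) (C.comp f) θ,
      coeffNumer_eq _ _ _ hroots, numer_double f]
  set A := ∏ w ∈ simplePairs m, pairSum (doubleRoots c) w with hA
  have hA0 : A ≠ 0 := Finset.prod_ne_zero_iff.2 fun z hz => pairSum_double_ne_zero f c hc hz
  set D := ∏ j ∈ I.erase i₀, ψ (coeffDelta g (u j)) with hD
  have hDne : D ≠ 0 := Finset.prod_ne_zero_iff.2 hδ
  have hsq : θ (ψ M) ^ 2 = (X * A * θ D) ^ 2 := by
    have h := congrArg (fun p => θ (ψ p)) hM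
    simp only [map_add, map_mul, map_pow, map_prod, map_sum] at h
    rw [Finset.prod_eq_zero hi₀ hD0, mul_zero, add_zero, Finset.sum_eq_single_of_mem i₀ hi₀,
      hN0] at h
    · rw [h, hD, map_prod, Finset.prod_pow]
      ring
    · intro i _ hi
      rw [Finset.prod_eq_zero (Finset.mem_erase.2 ⟨hi.symm, hi₀⟩), mul_zero]
      rw [hD0, zero_pow two_ne_zero]
  have hθdeg (p : K[X]) : (θ p).natDegree = p.natDegree * 2 := natDegree_expand 2 p
  have hdeg2 := congrArg natDegree hsq
  have hθD : θ D ≠ 0 := (map_ne_zero_iff θ hθinj).2 hDne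
  rw [natDegree_pow, natDegree_pow, natDegree_mul (mul_ne_zero X_ne_zero hA0) hθD,
    natDegree_mul X_ne_zero hA0, natDegree_X, hθdeg, hθdeg] at hdeg2
  obtain ⟨e, he⟩ := even_natDegree_simplePairs f c hc
  rw [← hA] at he
  omega

/-- Specializing to a product of distinct linear factors shows that `coeffDelta` is nonzero at a
translate of the generic coefficients. -/
lemma coeffDelta_generic_ne_zero [IsAlgClosed K] (f : ZMod 2 →+* K) {n : ℕ} (a : Fin n → K)
    (g : ZMod 2 →+* MvPolynomial (Fin n) K) :
    coeffDelta g (fun k => MvPolynomial.X k + MvPolynomial.C (a k)) ≠ 0 := by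
  have : Infinite K := IsAlgClosed.instInfinite
  let c : Fin n ↪ K := Fin.valEmbedding.trans (Infinite.natEmbedding K)
  set P : K[X] := ∏ k, (X - C (c k)) with hP
  have hmon : P.Monic := monic_prod_of_monic _ _ fun k _ => monic_X_sub_C _
  have hPdeg : P.natDegree = n := by
    rw [hP, natDegree_prod_of_monic _ _ fun k _ => monic_X_sub_C _]
    simp
  intro h0
  have h1 := congrArg (MvPolynomial.eval₂Hom (RingHom.id K) fun k : Fin n => P.coeff k - a k) h0
  rw [map_coeffDelta g f, map_zero] at h1
  simp only [map_add, MvPolynomial.eval₂Hom_X', MvPolynomial.eval₂Hom_C, RingHom.id_apply,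
    sub_add_cancel] at h1
  rw [coeffDelta_eq f _ c (monicPoly_coeff P hmon hPdeg)] at h1
  exact (delta_ne_zero_iff f c).2 c.injective h1

end

end Berlekamp

/-! ### Linear independence -/

open Berlekamp

theorem square_independence_char_two
    (Fq : Type*) [Field Fq] [Fintype Fq] (hq2 : Even (Fintype.card Fq))
    (n r : ℕ) (hn : 2 < n) (hr : 1 ≤ r)
    (α : Fin r → Polynomial Fq) (hαdeg : ∀ j, (α j).degree < n)
    (hαdist : Function.Injective α) :
    -- `E = 𝔽̄_q(U₀, …, U_{n-1})`
    let K := AlgebraicClosure Fq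
    let R := MvPolynomial (Fin n) K
    let E := FractionRing R
    let lift : Fq →+* E := (algebraMap R E).comp
      ((MvPolynomial.C : K →+* R).comp (algebraMap Fq K))
    -- `𝓕 = x^n + U_{n-1}x^{n-1} + ⋯ + U₁ x + U₀`
    let F : Polynomial E := X ^ n +
      ∑ i : Fin n, C (algebraMap R E (MvPolynomial.X i)) * X ^ (i : ℕ)
    (∀ i : Fin r, (F + (α i).map lift).Separable) ∧
      ∀ I : Finset (Fin r), I.Nonempty →
        ¬ ∃ H : E, ∑ i ∈ I, berlK (F + (α i).map lift) = H ^ 2 + H := by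
  intro K R E lift F
  have hchar : CharP Fq 2 := by
    have h := FiniteField.even_card_iff_char_two.2 (Nat.even_iff.1 hq2)
    exact ringChar.of_eq h
  let f : ZMod 2 →+* K := (algebraMap Fq K).comp (ZMod.castHom dvd_rfl Fq)
  let g : ZMod 2 →+* R := (MvPolynomial.C : K →+* R).comp f
  let β : Fin r → K[X] := fun i => (α i).map (algebraMap Fq K)
  have hβdeg (i : Fin r) : (β i).degree < n := degree_map_le.trans_lt (hαdeg i)
  have hβinj : Function.Injective β :=
    (Polynomial.map_injective _ (algebraMap Fq K).injective).comp hαdist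
  let u : Fin r → Fin n → R := fun i k => MvPolynomial.X k + MvPolynomial.C ((β i).coeff k)
  let φ : R →+* E := algebraMap R E
  have hφ : Function.Injective φ := IsFractionRing.injective R E
  have hpoly (i : Fin r) : F + (α i).map lift = monicPoly fun k => φ (u i k) := by
    have hd : ((α i).map lift).degree < n := degree_map_le.trans_lt (hαdeg i)
    have hF : F = monicPoly fun k => φ (MvPolynomial.X k) := rfl
    rw [hF, ← monicPoly_add _ _ hd]
    congr 1
    funext k
    simp [u, β, φ, lift]
  have hδ (i : Fin r) : coeffDelta g (u i) ≠ 0 :=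
    coeffDelta_generic_ne_zero f (fun k => (β i).coeff k) g
  have hδE (i : Fin r) : coeffDelta (φ.comp g) (fun k => φ (u i k)) = φ (coeffDelta g (u i)) :=
    (map_coeffDelta g _ φ (u i)).symm
  have hNE (i : Fin r) : coeffNumer (φ.comp g) (fun k => φ (u i k)) = φ (coeffNumer g (u i)) :=
    (map_coeffNumer g _ φ (u i)).symm
  have hδE0 (i : Fin r) : φ (coeffDelta g (u i)) ≠ 0 := (map_ne_zero_iff φ hφ).2 (hδ i)
  have hmain (i : Fin r) := separable_and_berlK (φ.comp g) (fun k => φ (u i k))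
    (by rw [hδE]; exact hδE0 i)
  refine ⟨fun i => by rw [hpoly]; exact (hmain i).1, ?_⟩
  rintro I ⟨i₀, hi₀⟩ ⟨H, hH⟩
  set D : R := ∏ i ∈ I, coeffDelta g (u i) with hD
  set N : R := ∑ i ∈ I, coeffNumer g (u i) * ∏ j ∈ I.erase i, coeffDelta g (u j) ^ 2 with hN
  have hcleared : (H ^ 2 + H) * φ D ^ 2 = φ N := by
    rw [← hH, Finset.sum_mul, hN, map_sum]
    refine Finset.sum_congr rfl fun i hi => ?_
    rw [hpoly, (hmain i).2, hδE, hNE, hD, ← Finset.mul_prod_erase I _ hi, map_mul, map_mul,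
      mul_pow, Finset.prod_pow, map_pow]
    rw [← mul_assoc, div_mul_cancel₀ _ (pow_ne_zero 2 (hδE0 i))]
  -- `H * D` is integral over the integrally closed ring `R`
  have hint : IsIntegral R (H * φ D) := by
    refine ⟨X ^ 2 + C D * X - C N, ?_, ?_⟩
    · rw [add_sub_assoc]
      refine monic_X_pow_add ?_
      compute_degree!
    · have : φ D * (H * φ D) = H * φ D ^ 2 := by ring
      simp only [eval₂_sub, eval₂_add, eval₂_mul, eval₂_C, eval₂_X, eval₂_X_pow]
      change (H * φ D) ^ 2 + φ D * (H * φ D) - φ N = 0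
      rw [← hcleared]
      ring
  obtain ⟨M, hM⟩ := IsIntegrallyClosed.isIntegral_iff.1 hint
  obtain ⟨m, rfl⟩ : ∃ m, n = m + 2 := ⟨n - 2, by omega⟩
  refine no_solution f (by omega) I β hβdeg hβinj i₀ hi₀ g u (fun _ _ => rfl) M (hφ ?_)
  have hM' : φ M = H * φ D := hM
  rw [map_add, map_mul, map_pow, ← hD, ← hN, hM', ← hcleared]
  ring
end

section
/- Let n ≥ 1 and let a₀, …, a_{n−1} be indeterminates over ℤ; set f = x^n + a_{n−1}x^{n−1} + ⋯ + a₁x + a₀ ∈ ℤ[a₀, …, a_{n−1}][x], disc(f) = (−1)^{n(n−1)/2}·Res_x(f, ∂f/∂x). Then: (i) there is a unique polynomial disc₊(f) ∈ ℤ[a₀, …, a_{n−1}] with Res_x(f(x), f(−x)) = 2^n · a₀ · disc₊(f); (ii) 4 divides disc₊(f) − disc(f) in ℤ[a₀, …, a_{n−1}]; and (iii) if n > 2, then the reduction modulo 2 of ξ₀ = (disc₊(f) − disc(f))/4, as an element of 𝔽₂[a₀, …, a_{n−1}], has degree at most 2·⌊(n−1)/2⌋ in the variable a₀. -/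
/-!
Adjoin the roots of `f`: the homomorphism `toRoots` from `ℤ[a₀, …, a_{n-1}]` to polynomials in `n`
variables that sends the coefficients to the elementary symmetric polynomials is injective with
image the symmetric polynomials. In terms of the roots, `Res(f(x), f(-x))` is `2^n a₀ P²` with
`P = ∏_{i<j} (X_i + X_j)`, and `disc` is `V²` with `V = ∏_{i<j} (X_j - X_i)`
(`toRoots_resultant_comp_neg`, `toRoots_disc`). Thus `disc₊` is the preimage of the symmetric
polynomial `P²`, unique as the ring is a domain. Moreover `P ≡ V` modulo `2`, so `4` divides
`P² - V²`; the quotient is again symmetric, so `4` divides `disc₊ - disc`.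

For the degree bound, give `a_i` the weight `n - i`. Since `P² - V²` is homogeneous of degree
`n(n-1)`, the polynomial `disc₊ - disc` is weighted homogeneous of that weight
(`isWeightedHomogeneous_of_toRoots`), so its degree in `a₀` is at most `n - 1`, and the only
monomial attaining this degree is `a₀^{n-1}` (`exponent_zero_le`). This suffices for odd `n`. For
even `n` the coefficient of `a₀^{n-1}` is seen on `x^n + t`, where `disc₊` vanishes because
`x^n + t` is even, and `disc` is a multiple of `n^n`. As `8 ∣ n^n` for even `n > 2`, the coefficient
of `a₀^{n-1}` in `ξ₀` is even (`eight_dvd_coeff`).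
-/


open Polynomial

/-- The Sylvester matrix of `f` and `g`, viewed as polynomials of degree (at most)
`m` and `n` respectively. -/
noncomputable def sylvester {R : Type*} [CommRing R] (m n : ℕ) (f g : Polynomial R) :
    Matrix (Fin (n + m)) (Fin (n + m)) R :=
  Matrix.of fun i j =>
    Fin.addCases
      (fun i₁ : Fin n => if (j : ℕ) ≤ m + (i₁ : ℕ) then f.coeff (m + (i₁ : ℕ) - j) else 0)
      (fun i₂ : Fin m => if (j : ℕ) ≤ n + (i₂ : ℕ) then g.coeff (n + (i₂ : ℕ) - j) else 0) i

/-- The resultant of `f` and `g`, viewed as polynomials of degree `m` and `n`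
respectively: the determinant of the Sylvester matrix. -/
noncomputable def resultant {R : Type*} [CommRing R] (m n : ℕ) (f g : Polynomial R) : R :=
  (sylvester m n f g).det

/-! ### Comparison of Sylvester matrices -/

/-- The Sylvester matrix of the statement lists coefficients in decreasing order along rows, the one
of Mathlib in increasing order along columns: they agree after transposing and reversing both
indices, so the determinants are equal without a sign. The degree bounds are needed because the
matrix of the statement only cuts off coefficients of negative index. -/
lemma resultant_eq_mathlib {R : Type*} [CommRing R] {m n : ℕ} {f g : R[X]}
    (hf : f.natDegree ≤ m) (hg : g.natDegree ≤ n) :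
    _root_.resultant m n f g = Polynomial.resultant f g m n := by
  let e : Fin (n + m) ≃ Fin (m + n) := (finCongr (add_comm n m)).trans Fin.revPerm
  have key : _root_.sylvester m n f g = (Polynomial.sylvester f g m n).transpose.submatrix e e := by
    ext i j
    induction i using Fin.addCases with
    | left i =>
      have he : e (Fin.castAdd m i) = Fin.natAdd m (Fin.rev i) := by
        ext; simp [e, Fin.rev]; omega
      have hj : (e j : ℕ) = n + m - (j + 1) := by simp [e, Fin.rev]; omega
      rw [Matrix.submatrix_apply, Matrix.transpose_apply, he]
      simp only [_root_.sylvester, Polynomial.sylvester, Matrix.of_apply, Fin.addCases_left,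
        Fin.addCases_right, hj, Fin.val_rev, Set.mem_Icc]
      split_ifs with h1 h2 h2
      · congr 1; omega
      · exact coeff_eq_zero_of_natDegree_lt (by omega)
      · omega
      · rfl
    | right i =>
      have he : e (Fin.natAdd n i) = Fin.castAdd n (Fin.rev i) := by
        ext; simp [e, Fin.rev]; omega
      have hj : (e j : ℕ) = n + m - (j + 1) := by simp [e, Fin.rev]; omega
      rw [Matrix.submatrix_apply, Matrix.transpose_apply, he]
      simp only [_root_.sylvester, Polynomial.sylvester, Matrix.of_apply, Fin.addCases_left,
        Fin.addCases_right, hj, Fin.val_rev, Set.mem_Icc]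
      split_ifs with h1 h2 h2
      · congr 1; omega
      · exact coeff_eq_zero_of_natDegree_lt (by omega)
      · omega
      · rfl
  rw [_root_.resultant, key, Matrix.det_submatrix_equiv_self, Matrix.det_transpose,
    Polynomial.resultant]

/-! ### The splitting homomorphism -/

/-- The homomorphism `ℤ[a₀, …, a_{n-1}] → ℤ[X₀, …, X_{n-1}]` with `a_i ↦ e_{n-i}(X)`, which makes
the generic polynomial split as `∏ (x + X_i)`. The roots are `-X_i` rather than `X_i`, so that no
signs appear in the coefficients. -/
noncomputable def toRoots (n : ℕ) : MvPolynomial (Fin n) ℤ →ₐ[ℤ] MvPolynomial (Fin n) ℤ :=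
  MvPolynomial.aeval fun i => MvPolynomial.esymm (Fin n) ℤ (n - i)

lemma toRoots_eq (n : ℕ) (p : MvPolynomial (Fin n) ℤ) :
    toRoots n p =
      (MvPolynomial.esymmAlgHom (Fin n) ℤ n (MvPolynomial.rename Fin.rev p) : MvPolynomial (Fin n) ℤ) := by
  rw [MvPolynomial.esymmAlgHom_apply, MvPolynomial.aeval_rename, toRoots]
  congr 2
  funext i
  rw [Function.comp_apply, Fin.val_rev]
  congr 1
  omega

lemma toRoots_injective (n : ℕ) : Function.Injective (toRoots n) := by
  intro p q h
  rw [toRoots_eq, toRoots_eq] at h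
  exact MvPolynomial.rename_injective _ Fin.rev_injective
    (MvPolynomial.esymmAlgHom_injective ℤ (by simp) (Subtype.ext h))

lemma toRoots_isSymmetric (n : ℕ) (p : MvPolynomial (Fin n) ℤ) :
    (toRoots n p).IsSymmetric := by
  rw [toRoots_eq]; exact Subtype.prop _

/-- The fundamental theorem of symmetric polynomials: `toRoots n` is onto the invariants. -/
lemma exists_toRoots_eq {n : ℕ} {s : MvPolynomial (Fin n) ℤ} (hs : s.IsSymmetric) :
    ∃ p, toRoots n p = s := by
  obtain ⟨q, hq⟩ := MvPolynomial.esymmAlgHom_surjective (σ := Fin n) (n := n) ℤ (by simp) ⟨s, hs⟩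
  refine ⟨MvPolynomial.rename Fin.rev q, ?_⟩
  rw [toRoots_eq, MvPolynomial.rename_rename, Fin.rev_involutive.comp_self,
    MvPolynomial.rename_id_apply, hq]

/-- The generic monic polynomial `x^n + a_{n-1}x^{n-1} + ⋯ + a₀`. -/
noncomputable def genericPoly (n : ℕ) : (MvPolynomial (Fin n) ℤ)[X] :=
  X ^ n + ∑ i : Fin n, C (MvPolynomial.X i) * X ^ (i : ℕ)

lemma genericPoly_natDegree_le (n : ℕ) : (genericPoly n).natDegree ≤ n := by
  unfold genericPoly
  refine natDegree_add_le_of_degree_le (natDegree_X_pow_le n) ?_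
  refine natDegree_sum_le_of_forall_le _ _ fun i _ => ?_
  exact (natDegree_C_mul_X_pow_le _ _).trans i.2.le

/-- The split polynomial `∏ (x + X_i)`, with roots `-X_i`. -/
noncomputable def rootPoly (n : ℕ) : (MvPolynomial (Fin n) ℤ)[X] :=
  ∏ i : Fin n, (X + C (MvPolynomial.X i))


lemma genericPoly_map (n : ℕ) :
    (genericPoly n).map (toRoots n : MvPolynomial (Fin n) ℤ →+* _) = rootPoly n := by
  have hX : ∀ i : Fin n, toRoots n (MvPolynomial.X i) = MvPolynomial.esymm (Fin n) ℤ (n - i) :=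
    fun i => by simp [toRoots]
  rw [rootPoly, MvPolynomial.prod_C_add_X_eq_sum_esymm, ← Finset.sum_range_reflect,
    Finset.sum_range_succ, genericPoly]
  simp only [Polynomial.map_add, Polynomial.map_pow, map_X, Polynomial.map_sum,
    Polynomial.map_mul, map_C, Fintype.card_fin, RingHom.coe_coe, hX]
  rw [add_comm, ← Fin.sum_univ_eq_sum_range]
  congr 1
  · refine Finset.sum_congr rfl fun i _ => ?_
    congr 2
    have := i.2
    omega
  · simp

lemma rootPoly_natDegree (n : ℕ) : (rootPoly n).natDegree = n := by
  rw [rootPoly, natDegree_prod_of_monic _ _ fun i _ => monic_X_add_C _]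
  simp

lemma resultant_rootPoly {n k : ℕ} {g : (MvPolynomial (Fin n) ℤ)[X]} (hg : g.natDegree ≤ k) :
    Polynomial.resultant (rootPoly n) g n k = ∏ i, g.eval (-MvPolynomial.X i) := by
  have h := resultant_prod_left Finset.univ
    (fun i : Fin n => X + C (MvPolynomial.X i : MvPolynomial (Fin n) ℤ)) g k (by simp) hg
  rw [← rootPoly, rootPoly_natDegree] at h
  rw [h]
  refine Finset.prod_congr rfl fun i _ => ?_
  rw [natDegree_X_add_C, resultant_X_add_C_left _ _ _ hg]

/-- `Res(f, g) = ∏ g(r)` over the roots `r` of `f`, with `f` generic and `r = -X_i`. -/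
lemma toRoots_resultant {n k : ℕ} {g : (MvPolynomial (Fin n) ℤ)[X]} (hg : g.natDegree ≤ k) :
    toRoots n (_root_.resultant n k (genericPoly n) g) =
      ∏ i, (g.map (toRoots n : MvPolynomial (Fin n) ℤ →+* _)).eval (-MvPolynomial.X i) := by
  rw [resultant_eq_mathlib (genericPoly_natDegree_le n) hg,
    ← resultant_rootPoly (natDegree_map_le.trans hg), ← genericPoly_map, resultant_map_map]
  rfl

/-! ### Root expressions of `disc₊` and `disc` -/

/-- `∏_{i<j} (X_i + X_j)`, whose square is `disc₊` in terms of the roots. -/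
noncomputable def sumProd (n : ℕ) : MvPolynomial (Fin n) ℤ :=
  ∏ i, ∏ j ∈ Finset.Ioi i, (MvPolynomial.X j + MvPolynomial.X i)

/-- The Vandermonde product `∏_{i<j} (X_j - X_i)`, whose square is `disc` in terms of the roots. -/
noncomputable def diffProd (n : ℕ) : MvPolynomial (Fin n) ℤ :=
  ∏ i, ∏ j ∈ Finset.Ioi i, (MvPolynomial.X j - MvPolynomial.X i)

lemma sumProd_sq (n : ℕ) : sumProd n ^ 2 =
    ∏ i : Fin n, ∏ j ∈ {i}ᶜ, (MvPolynomial.X j + MvPolynomial.X i : MvPolynomial (Fin n) ℤ) := by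
  rw [← Finset.prod_prod_Ioi_mul_eq_prod_prod_off_diag
    (fun j i : Fin n => (MvPolynomial.X j + MvPolynomial.X i : MvPolynomial (Fin n) ℤ))]
  simp only [sumProd, ← Finset.prod_pow]
  refine Finset.prod_congr rfl fun i _ => Finset.prod_congr rfl fun j _ => ?_
  ring

lemma sum_card_Ioi (n : ℕ) : ∑ i : Fin n, (Finset.Ioi i).card = n * (n - 1) / 2 := by
  simp only [Fin.card_Ioi]
  rw [Fin.sum_univ_eq_sum_range (fun i => n - 1 - i), Finset.sum_range_reflect (fun i => i),
    Finset.sum_range_id]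

lemma diffProd_sq (n : ℕ) : diffProd n ^ 2 = (-1) ^ (n * (n - 1) / 2) *
    ∏ i : Fin n, ∏ j ∈ {i}ᶜ, (MvPolynomial.X j - MvPolynomial.X i : MvPolynomial (Fin n) ℤ) := by
  rw [← Finset.prod_prod_Ioi_mul_eq_prod_prod_off_diag
    (fun j i : Fin n => (MvPolynomial.X j - MvPolynomial.X i : MvPolynomial (Fin n) ℤ)),
    ← sum_card_Ioi, ← Finset.prod_pow_eq_pow_sum, ← Finset.prod_mul_distrib]
  simp only [diffProd, ← Finset.prod_pow, ← Finset.prod_const, ← Finset.prod_mul_distrib]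
  refine Finset.prod_congr rfl fun i _ => Finset.prod_congr rfl fun j _ => ?_
  ring

/-- Since `P ≡ V (mod 2)` for `P = sumProd n` and `V = diffProd n`, writing `P = V + 2e` gives
`P² - V² = 4(e² + Ve)`. -/
lemma four_dvd_sq_sub_sq (n : ℕ) :
    (4 : MvPolynomial (Fin n) ℤ) ∣ sumProd n ^ 2 - diffProd n ^ 2 := by
  have h : (2 : MvPolynomial (Fin n) ℤ) ∣ sumProd n - diffProd n := by
    rw [← Ideal.mem_span_singleton, ← Ideal.Quotient.mk_eq_mk_iff_sub_mem]
    simp only [sumProd, diffProd, map_prod]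
    refine Finset.prod_congr rfl fun i _ => Finset.prod_congr rfl fun j _ => ?_
    rw [Ideal.Quotient.mk_eq_mk_iff_sub_mem, Ideal.mem_span_singleton]
    exact ⟨MvPolynomial.X i, by ring⟩
  obtain ⟨e, he⟩ := h
  refine ⟨e ^ 2 + diffProd n * e, ?_⟩
  rw [sub_eq_iff_eq_add.mp he]
  ring

lemma toRoots_X_zero {n : ℕ} (hn : 1 ≤ n) :
    toRoots n (MvPolynomial.X ⟨0, hn⟩) = ∏ i, MvPolynomial.X i := by
  have h := MvPolynomial.prod_X_add_C_coeff ℤ (Fin n) 0 (Nat.zero_le _)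
  rw [coeff_zero_eq_eval_zero, eval_prod] at h
  simp only [eval_add, eval_X, eval_C, zero_add, Fintype.card_fin] at h
  rw [h]
  simp [toRoots]

lemma toRoots_resultant_comp_neg {n : ℕ} (hn : 1 ≤ n) :
    toRoots n (_root_.resultant n n (genericPoly n) ((genericPoly n).comp (-X))) =
      2 ^ n * toRoots n (MvPolynomial.X ⟨0, hn⟩) * sumProd n ^ 2 := by
  have hd : ((genericPoly n).comp (-X)).natDegree ≤ n := by
    refine natDegree_comp_le.trans ?_
    rw [natDegree_neg, natDegree_X, mul_one]
    exact genericPoly_natDegree_le n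
  rw [toRoots_resultant hd, sumProd_sq, toRoots_X_zero]
  have h2 : (2 : MvPolynomial (Fin n) ℤ) ^ n = ∏ _i : Fin n, 2 := by simp
  rw [h2, ← Finset.prod_mul_distrib, ← Finset.prod_mul_distrib]
  refine Finset.prod_congr rfl fun i _ => ?_
  rw [Polynomial.map_comp, genericPoly_map, eval_comp, rootPoly, eval_prod,
    Fintype.prod_eq_mul_prod_compl i]
  simp only [Polynomial.map_neg, map_X, eval_neg, eval_X, eval_add, eval_C, neg_neg]
  rw [two_mul]
  congr 1
  exact Finset.prod_congr rfl fun j _ => add_comm _ _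

lemma toRoots_disc (n : ℕ) :
    toRoots n ((-1) ^ (n * (n - 1) / 2) *
      _root_.resultant n (n - 1) (genericPoly n) (derivative (genericPoly n))) =
      diffProd n ^ 2 := by
  have hd : (derivative (genericPoly n)).natDegree ≤ n - 1 :=
    (natDegree_derivative_le _).trans (Nat.sub_le_sub_right (genericPoly_natDegree_le n) 1)
  rw [map_mul, toRoots_resultant hd, diffProd_sq, map_pow, map_neg, map_one]
  congr 1
  refine Finset.prod_congr rfl fun i _ => ?_
  rw [← derivative_map, genericPoly_map, rootPoly, Fintype.prod_eq_mul_prod_compl i,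
    derivative_mul, eval_add, eval_mul, eval_mul, eval_prod]
  simp [neg_add_eq_sub]

/-- In `Res(f(x), f(-x)) = 2^n a₀ · (∏_{i<j} (X_i + X_j))²` everything but the last factor is visibly
symmetric, and one may cancel. -/
lemma sumProd_sq_isSymmetric {n : ℕ} (hn : 1 ≤ n) : (sumProd n ^ 2).IsSymmetric := by
  intro e
  have h := toRoots_isSymmetric n
    (_root_.resultant n n (genericPoly n) ((genericPoly n).comp (-X))) e
  have h0 := toRoots_isSymmetric n (MvPolynomial.X ⟨0, hn⟩) e
  rw [toRoots_resultant_comp_neg hn, map_mul, map_mul, h0, map_pow, map_ofNat] at h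
  refine mul_left_cancel₀ ?_ h
  refine mul_ne_zero (by simp) ?_
  rw [Ne, map_eq_zero_iff _ (toRoots_injective n)]
  exact MvPolynomial.X_ne_zero _

/-! ### Weighted homogeneity -/

/-- The weight `n - i` of `a_i`, the degree of `a_i` as a polynomial in the roots. -/
def rootWeight (n : ℕ) (i : Fin n) : ℕ := n - i

lemma esymm_isHomogeneous (n k : ℕ) : (MvPolynomial.esymm (Fin n) ℤ k).IsHomogeneous k := by
  rw [MvPolynomial.esymm]
  refine MvPolynomial.IsHomogeneous.sum _ _ _ fun t ht => ?_
  have := MvPolynomial.IsHomogeneous.prod t (fun i => (MvPolynomial.X i : MvPolynomial (Fin n) ℤ))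
    (fun _ => 1) fun i _ => MvPolynomial.isHomogeneous_X _ _
  simpa [(Finset.mem_powersetCard.mp ht).2] using this

lemma toRoots_monomial_isHomogeneous (n : ℕ) (m : Fin n →₀ ℕ) (c : ℤ) :
    (toRoots n (MvPolynomial.monomial m c)).IsHomogeneous (Finsupp.weight (rootWeight n) m) := by
  rw [toRoots, MvPolynomial.aeval_monomial, Finsupp.weight_apply]
  have h := (MvPolynomial.IsHomogeneous.prod m.support
    (fun i => MvPolynomial.esymm (Fin n) ℤ (n - i) ^ m i) (fun i => (n - i) * m i)
    fun i _ => (esymm_isHomogeneous n _).pow _).C_mul c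
  have hw : (m.sum fun i k => k • rootWeight n i) = ∑ i ∈ m.support, (n - i) * m i :=
    Finset.sum_congr rfl fun i _ => by simp [rootWeight, mul_comm]
  rw [hw]
  exact h

lemma homogeneousComponent_toRoots (n k : ℕ) (p : MvPolynomial (Fin n) ℤ) :
    MvPolynomial.homogeneousComponent k (toRoots n p) =
      toRoots n (MvPolynomial.weightedHomogeneousComponent (rootWeight n) k p) := by
  induction p using MvPolynomial.induction_on' with
  | add p q hp hq => simp only [map_add, hp, hq]
  | monomial m c =>
    rw [MvPolynomial.homogeneousComponent_of_mem (toRoots_monomial_isHomogeneous n m c),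
      MvPolynomial.weightedHomogeneousComponent_of_mem
        (MvPolynomial.isWeightedHomogeneous_monomial (rootWeight n) m c rfl)]
    split_ifs <;> simp

/-- By injectivity of `toRoots n`, homogeneity in the roots can be pulled back to the coefficients. -/
lemma isWeightedHomogeneous_of_toRoots {n N : ℕ} {p : MvPolynomial (Fin n) ℤ}
    (h : (toRoots n p).IsHomogeneous N) : p.IsWeightedHomogeneous (rootWeight n) N := by
  intro m hm
  by_contra hne
  have h1 := homogeneousComponent_toRoots n (Finsupp.weight (rootWeight n) m) p
  rw [MvPolynomial.homogeneousComponent_of_mem h, if_neg hne, eq_comm,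
    map_eq_zero_iff _ (toRoots_injective n)] at h1
  apply hm
  simpa [MvPolynomial.coeff_weightedHomogeneousComponent] using congrArg (MvPolynomial.coeff m) h1

lemma isHomogeneous_prod_Ioi_sq {n : ℕ} {g : Fin n → Fin n → MvPolynomial (Fin n) ℤ}
    (hg : ∀ i j, (g i j).IsHomogeneous 1) :
    ((∏ i, ∏ j ∈ Finset.Ioi i, g i j) ^ 2).IsHomogeneous (n * (n - 1)) := by
  have h := (MvPolynomial.IsHomogeneous.prod Finset.univ _ _ fun i _ =>
    MvPolynomial.IsHomogeneous.prod (Finset.Ioi i) (g i) (fun _ => 1) fun j _ => hg i j).pow 2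
  convert h using 1
  simp only [Finset.sum_const, smul_eq_mul, mul_one]
  rw [sum_card_Ioi, Nat.div_mul_cancel (Nat.even_mul_pred_self n).two_dvd]

/-! ### Specialization to `x^n + t` -/

/-- The specialization `a₀ ↦ t`, `a_i ↦ 0` for `i ≠ 0`, with `t` the variable of `ℤ[X]`. It sends
the generic polynomial to `x^n + t`. -/
noncomputable def binomialSpec {n : ℕ} (hn : 1 ≤ n) : MvPolynomial (Fin n) ℤ →ₐ[ℤ] ℤ[X] :=
  MvPolynomial.aeval fun i => if i = ⟨0, hn⟩ then X else 0

/-- The specialization retains exactly the coefficients of the pure powers of `a₀`. -/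
lemma coeff_binomialSpec {n : ℕ} (hn : 1 ≤ n) (k : ℕ) (p : MvPolynomial (Fin n) ℤ) :
    (binomialSpec hn p).coeff k = p.coeff (Finsupp.single ⟨0, hn⟩ k) := by
  induction p using MvPolynomial.induction_on' with
  | add p q hp hq => simp only [map_add, coeff_add, MvPolynomial.coeff_add, hp, hq]
  | monomial m c =>
    rw [binomialSpec, MvPolynomial.aeval_monomial, MvPolynomial.coeff_monomial]
    by_cases hm : ∃ l, m = Finsupp.single ⟨0, hn⟩ l
    · obtain ⟨l, rfl⟩ := hm
      rw [Finsupp.prod_single_index (by simp)]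
      simp [coeff_X_pow, (Finsupp.single_injective _).eq_iff, eq_comm]
    · rw [if_neg fun h => hm ⟨k, h⟩]
      obtain ⟨i, hi, hi0⟩ : ∃ i, m i ≠ 0 ∧ i ≠ ⟨0, hn⟩ := by
        by_contra! hcon
        refine hm ⟨m ⟨0, hn⟩, Finsupp.ext fun i => ?_⟩
        by_cases h : i = ⟨0, hn⟩
        · subst h; simp
        · rw [Finsupp.single_eq_of_ne h]
          by_contra h'
          exact h (hcon i h')
      have : (m.prod fun i k => (if i = ⟨0, hn⟩ then X else 0 : ℤ[X]) ^ k) = 0 :=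
        Finset.prod_eq_zero (Finsupp.mem_support_iff.mpr hi) (by simp [hi0, hi])
      rw [this, mul_zero, coeff_zero]

lemma genericPoly_map_binomialSpec {n : ℕ} (hn : 1 ≤ n) :
    (genericPoly n).map (binomialSpec hn : MvPolynomial (Fin n) ℤ →+* ℤ[X]) = X ^ n + C X := by
  simp only [genericPoly, Polynomial.map_add, Polynomial.map_pow, map_X, Polynomial.map_sum,
    Polynomial.map_mul, map_C]
  congr 1
  rw [Finset.sum_eq_single (⟨0, hn⟩ : Fin n)]
  · simp [binomialSpec]
  · intro i _ hi
    simp [binomialSpec, hi]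
  · simp

/-- For even `n` the polynomial `g = x^n + t` is even, so `Res(g(x), g(-x)) = Res(g, g) = 0`. -/
lemma binomialSpec_resultant_comp_neg {n : ℕ} (hn : 1 ≤ n) (he : Even n) :
    binomialSpec hn (_root_.resultant n n (genericPoly n) ((genericPoly n).comp (-X))) = 0 := by
  have hd : ((genericPoly n).comp (-X)).natDegree ≤ n := by
    refine natDegree_comp_le.trans ?_
    rw [natDegree_neg, natDegree_X, mul_one]
    exact genericPoly_natDegree_le n
  rw [resultant_eq_mathlib (genericPoly_natDegree_le n) hd]
  refine (resultant_map_map _ _ _ _ (binomialSpec hn : MvPolynomial (Fin n) ℤ →+* ℤ[X])).symm.trans ?_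
  rw [Polynomial.map_comp, genericPoly_map_binomialSpec]
  have h1 : (X ^ n + C X : ℤ[X][X]).comp
      (Polynomial.map (binomialSpec hn : MvPolynomial (Fin n) ℤ →+* ℤ[X]) (-X)) = X ^ n + C X := by
    simpa using Even.neg_pow he (X : ℤ[X][X])
  have h2 : (X ^ n + C X : ℤ[X][X]).natDegree = n := natDegree_X_pow_add_C
  have h3 := resultant_self_eq_zero (X ^ n + C X : ℤ[X][X]) (by omega)
  rw [h1]
  rwa [h2] at h3

/-- `Res(x^n + t, n x^{n-1})` is a multiple of `n^n`. -/
lemma dvd_binomialSpec_resultant_derivative {n : ℕ} (hn : 1 ≤ n) :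
    (n : ℤ[X]) ^ n ∣ binomialSpec hn
      (_root_.resultant n (n - 1) (genericPoly n) (derivative (genericPoly n))) := by
  have hd : (derivative (genericPoly n)).natDegree ≤ n - 1 :=
    (natDegree_derivative_le _).trans (Nat.sub_le_sub_right (genericPoly_natDegree_le n) 1)
  rw [resultant_eq_mathlib (genericPoly_natDegree_le n) hd]
  have h := (resultant_map_map (genericPoly n) (derivative (genericPoly n)) n (n - 1)
    (binomialSpec hn : MvPolynomial (Fin n) ℤ →+* ℤ[X]))
  rw [← derivative_map, genericPoly_map_binomialSpec, derivative_add, derivative_C, add_zero,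
    derivative_X_pow, resultant_C_mul_right] at h
  exact ⟨_, h.symm⟩

/-! ### The three claims -/

/-- The quotient of a symmetric polynomial by `4` is symmetric, so divisibility by `4` descends from
the roots to the coefficients. -/
lemma four_dvd_of_toRoots_eq {n : ℕ} {p : MvPolynomial (Fin n) ℤ}
    (hp : toRoots n p = sumProd n ^ 2 - diffProd n ^ 2) : 4 ∣ p := by
  obtain ⟨s, hs⟩ := four_dvd_sq_sub_sq n
  have hsymm : s.IsSymmetric := by
    intro e
    have h := toRoots_isSymmetric n p e
    rw [hp, hs, map_mul, map_ofNat] at h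
    exact mul_left_cancel₀ (by simp) h
  obtain ⟨q, rfl⟩ := exists_toRoots_eq hsymm
  refine ⟨q, toRoots_injective n ?_⟩
  rw [hp, hs, map_mul, map_ofNat]

/-- A monomial of weight `n(n-1)` has degree at most `n-1` in `a₀`, because `a₀` has weight `n`; it
can only reach `n-1` as `a₀^{n-1}`, because all weights are positive. -/
lemma exponent_zero_le {n : ℕ} (hn : 1 ≤ n) {m : Fin n →₀ ℕ}
    (hm : Finsupp.weight (rootWeight n) m = n * (n - 1)) :
    m ⟨0, hn⟩ ≤ n - 1 ∧ (m ⟨0, hn⟩ = n - 1 → m = Finsupp.single ⟨0, hn⟩ (n - 1)) := by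
  rw [Finsupp.weight_apply, Finsupp.sum_fintype _ _ (by simp),
    Fintype.sum_eq_add_sum_compl (⟨0, hn⟩ : Fin n)] at hm
  simp only [rootWeight, smul_eq_mul, Nat.sub_zero] at hm
  constructor
  · refine Nat.le_of_mul_le_mul_left (c := n) ?_ hn
    rw [mul_comm n (m _)]
    omega
  · intro h
    rw [h, mul_comm (n - 1) n, Nat.add_eq_left, Finset.sum_eq_zero_iff] at hm
    ext i
    by_cases hi : i = ⟨0, hn⟩
    · subst hi; simpa using h
    · have h0 := hm i (by simpa using hi)
      have := i.2
      rw [Finsupp.single_eq_of_ne hi]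
      rcases Nat.mul_eq_zero.mp h0 with h0 | h0 <;> omega

/-- For even `n > 2`, setting `a_i = 0` for `i ≠ 0` turns `disc₊` into `0` and `disc` into a multiple
of `n^n`, which is divisible by `8`. This fails for `n = 2`, where `n^n = 4`. -/
lemma eight_dvd_coeff {n : ℕ} (hn : 2 < n) (he : Even n) {d : MvPolynomial (Fin n) ℤ}
    (hd : _root_.resultant n n (genericPoly n) ((genericPoly n).comp (-X)) =
      2 ^ n * MvPolynomial.X ⟨0, by omega⟩ * d) (k : ℕ) :
    8 ∣ (d - (-1) ^ (n * (n - 1) / 2) *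
      _root_.resultant n (n - 1) (genericPoly n) (derivative (genericPoly n))).coeff
        (Finsupp.single ⟨0, by omega⟩ k) := by
  have hn1 : 1 ≤ n := by omega
  have hd0 : binomialSpec hn1 d = 0 := by
    have h := binomialSpec_resultant_comp_neg hn1 he
    rw [hd, map_mul, map_mul, map_pow, map_ofNat] at h
    have hX : binomialSpec hn1 (MvPolynomial.X ⟨0, hn1⟩) = X := by simp [binomialSpec]
    rw [hX] at h
    simpa using h
  have h8 : (8 : ℤ[X]) ∣ (n : ℤ[X]) ^ n := by
    have h : (8 : ℕ) ∣ n ^ n :=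
      (pow_dvd_pow 2 (show 3 ≤ n from hn)).trans (pow_dvd_pow_of_dvd he.two_dvd n)
    exact_mod_cast Nat.cast_dvd_cast (α := ℤ[X]) h
  have hdvd : C (8 : ℤ) ∣ binomialSpec hn1 (d - (-1) ^ (n * (n - 1) / 2) *
      _root_.resultant n (n - 1) (genericPoly n) (derivative (genericPoly n))) := by
    rw [map_sub, hd0, zero_sub, dvd_neg, map_mul]
    exact (h8.trans (dvd_binomialSpec_resultant_derivative hn1)).mul_left _
  rw [← coeff_binomialSpec hn1]
  exact (C_dvd_iff_dvd_coeff _ _).mp hdvd k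

theorem discPlus_exists_and_xi_degree
    (n : ℕ) (hn : 1 ≤ n) :
    -- work in `ℤ[a₀, …, a_{n-1}]`, with `a_i` the variables
    let R := MvPolynomial (Fin n) ℤ
    let a₀ : R := MvPolynomial.X (⟨0, hn⟩ : Fin n)
    -- the generic monic polynomial `f = x^n + a_{n-1}x^{n-1} + ⋯ + a₀`
    let f : Polynomial R := X ^ n + ∑ i : Fin n, C (MvPolynomial.X i) * X ^ (i : ℕ)
    let disc : R := (-1) ^ (n * (n - 1) / 2) * resultant n (n - 1) f (derivative f)
    -- (i) `Res(f(x), f(-x)) = 2^n · a₀ · disc₊(f)` for a unique `disc₊(f)`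
    (∃! discPlus : R, resultant n n f (f.comp (-X)) = 2 ^ n * a₀ * discPlus) ∧
    -- (ii), (iii)
    (∀ discPlus : R, resultant n n f (f.comp (-X)) = 2 ^ n * a₀ * discPlus →
      ∃ ξ₀ : R, discPlus - disc = 4 * ξ₀ ∧
        (2 < n → ∀ ξ₀' : R, discPlus - disc = 4 * ξ₀' →
          MvPolynomial.degreeOf (⟨0, hn⟩ : Fin n)
            (MvPolynomial.map (Int.castRingHom (ZMod 2)) ξ₀') ≤ 2 * ((n - 1) / 2))) := by
  intro R a₀ f disc
  have hcancel : (2 ^ n * a₀ : R) ≠ 0 :=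
    mul_ne_zero (by simp [R]) (MvPolynomial.X_ne_zero _)
  have hres : toRoots n (_root_.resultant n n f (f.comp (-X))) =
    2 ^ n * toRoots n a₀ * sumProd n ^ 2 := toRoots_resultant_comp_neg hn
  have hdisc : toRoots n disc = diffProd n ^ 2 := toRoots_disc n
  have hplus : ∀ d : R, _root_.resultant n n f (f.comp (-X)) = 2 ^ n * a₀ * d ↔
      toRoots n d = sumProd n ^ 2 := by
    intro d
    have h2 : toRoots n (2 ^ n * a₀) = 2 ^ n * toRoots n a₀ := by
      rw [map_mul, map_pow, map_ofNat]
    rw [← (toRoots_injective n).eq_iff, hres, map_mul _ _ d, ← h2, eq_comm, mul_right_inj']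
    rwa [Ne, map_eq_zero_iff _ (toRoots_injective n)]
  refine ⟨?_, fun d hd => ?_⟩
  · obtain ⟨d, hd⟩ := exists_toRoots_eq (sumProd_sq_isSymmetric hn)
    exact ⟨d, (hplus d).mpr hd, fun d' hd' =>
      toRoots_injective n (((hplus d').mp hd').trans hd.symm)⟩
  have hdiff : toRoots n (d - disc) = sumProd n ^ 2 - diffProd n ^ 2 := by
    rw [map_sub, (hplus d).mp hd, hdisc]
  obtain ⟨ξ₀, hξ₀⟩ := four_dvd_of_toRoots_eq hdiff
  refine ⟨ξ₀, hξ₀, fun h2 ξ hξ => ?_⟩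
  have hwt : MvPolynomial.IsWeightedHomogeneous (rootWeight n) (d - disc) (n * (n - 1)) := by
    apply isWeightedHomogeneous_of_toRoots
    rw [hdiff]
    exact (isHomogeneous_prod_Ioi_sq fun i j =>
      (MvPolynomial.isHomogeneous_X _ _).add (MvPolynomial.isHomogeneous_X _ _)).sub
      (isHomogeneous_prod_Ioi_sq fun i j =>
        (MvPolynomial.isHomogeneous_X _ _).sub (MvPolynomial.isHomogeneous_X _ _))
  have hcoeff : ∀ m, (d - disc).coeff m = 4 * ξ.coeff m := by
    intro m
    rw [hξ, show (4 : R) = MvPolynomial.C 4 from (map_ofNat _ 4).symm, MvPolynomial.coeff_C_mul]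
  rw [MvPolynomial.degreeOf_le_iff]
  intro m hm
  rw [MvPolynomial.mem_support_iff, MvPolynomial.coeff_map, eq_intCast, Ne,
    ZMod.intCast_zmod_eq_zero_iff_dvd] at hm
  obtain ⟨hle, heq⟩ := exponent_zero_le hn (hwt (d := m) (by
    rw [hcoeff]
    rintro h
    exact hm (by rw [(mul_eq_zero.mp h).resolve_left (by norm_num)]; exact dvd_zero _)))
  -- For odd `n` the bound `2 * ((n - 1) / 2)` is `n - 1`; for even `n` it is `n - 2`, so the
  -- monomial `a₀ ^ (n - 1)` has to be excluded.
  rcases Nat.even_or_odd n with he | ho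
  · have hne : m ⟨0, hn⟩ ≠ n - 1 := by
      intro h
      have h8 := eight_dvd_coeff h2 he hd (n - 1)
      rw [← heq h] at h8
      have h8' : (8 : ℤ) ∣ 4 * ξ.coeff m := hcoeff m ▸ h8
      apply hm
      push_cast
      omega
    obtain ⟨k, rfl⟩ := he
    omega
  · obtain ⟨k, rfl⟩ := ho
    omega
end
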